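/- Let N ≥ 2 and 0 < R₀ < R₁. Suppose Λ∞ : ℝ → ℝ is a function such that for every s ∈ [0, R₁ − R₀), (λ₁(p, Ω_s))^{1/p} → Λ∞(s) as p → ∞. Then Λ∞ is continuous on [0, R₁ − R₀) and strictly decreasing on [0, R₁ − R₀): for all 0 ≤ s₁ < s₂ < R₁ − R₀ one has Λ∞(s₂) < Λ∞(s₁). -/

import Mathlib

open MeasureTheory Metric Set Filter
open scoped RealInnerProductSpace ENNReal Topology

/-- The first Dirichlet eigenvalue of the p-Laplacian on `Ω`, defined variationally as the
infimum of Rayleigh quotients of smooth, not identically zero functions with compact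
support contained in `Ω`. -/
noncomputable def lam1 {N : ℕ} (p : ℝ) (Ω : Set (EuclideanSpace ℝ (Fin N))) : ℝ :=
  sInf { r : ℝ | ∃ u : EuclideanSpace ℝ (Fin N) → ℝ,
    ContDiff ℝ (⊤ : ℕ∞) u ∧ u ≠ 0 ∧ HasCompactSupport u ∧ tsupport u ⊆ Ω ∧
    r = (∫ x in Ω, ‖gradient u x‖ ^ p) / (∫ x in Ω, |u x| ^ p) }

/-- The first standard basis vector `e₁` of `ℝ^N`. -/
noncomputable def e1 (N : ℕ) : EuclideanSpace ℝ (Fin N) :=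
  (WithLp.equiv 2 (Fin N → ℝ)).symm (fun i => if (i : ℕ) = 0 then 1 else 0)

/-- The eccentric annulus `Ω_s = B_{R₁}(0) \ closure (B_{R₀}(s e₁))`. -/
noncomputable def Om (N : ℕ) (R₀ R₁ s : ℝ) : Set (EuclideanSpace ℝ (Fin N)) :=
  ball 0 R₁ \ closure (ball (s • e1 N) R₀)

/-- `u` is a first eigenfunction of the p-Laplacian on `Ω` with eigenvalue `lam`:
C¹ on an open set containing the closure of `Ω`, positive in `Ω`, zero on `∂Ω`, and a weak
solution of `−Δ_p u = lam · u^{p−1}`. -/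
def IsFirstEigenfunction {N : ℕ} (p : ℝ) (Ω : Set (EuclideanSpace ℝ (Fin N)))
    (lam : ℝ) (u : EuclideanSpace ℝ (Fin N) → ℝ) : Prop :=
  (∃ V : Set (EuclideanSpace ℝ (Fin N)), IsOpen V ∧ closure Ω ⊆ V ∧ ContDiffOn ℝ 1 u V) ∧
  (∀ x ∈ Ω, 0 < u x) ∧
  (∀ x ∈ frontier Ω, u x = 0) ∧
  (∀ φ : EuclideanSpace ℝ (Fin N) → ℝ, ContDiff ℝ (⊤ : ℕ∞) φ → HasCompactSupport φ →
    tsupport φ ⊆ Ω →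
    ∫ x in Ω, ‖gradient u x‖ ^ (p - 2) * ⟪gradient u x, gradient φ x⟫ =
      lam * ∫ x in Ω, (u x) ^ (p - 1) * φ x)


lemma norm_grad {N : ℕ} (u : EuclideanSpace ℝ (Fin N) → ℝ) (x : EuclideanSpace ℝ (Fin N)) :
    ‖gradient u x‖ = ‖fderiv ℝ u x‖ := by
  simp [gradient]

lemma pointwise_bound {N : ℕ} {u : EuclideanSpace ℝ (Fin N) → ℝ}
    (hu : ContDiff ℝ (⊤ : ℕ∞) u) {p : ℝ} (hp : 1 ≤ p) (x w : EuclideanSpace ℝ (Fin N))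
    (h0 : u (x + w) = 0) :
    |u x| ^ p ≤ ‖w‖ ^ p * ∫ t in Icc (0:ℝ) 1, ‖fderiv ℝ u (x + t • w)‖ ^ p := by
  have hp0 : 0 < p := by linarith
  have hfc : Continuous (fderiv ℝ u) := hu.continuous_fderiv (by simp)
  have hgc : Continuous (fun t : ℝ => ‖fderiv ℝ u (x + t • w)‖) := by fun_prop
  have hder : ∀ t ∈ uIcc (0:ℝ) 1,
      HasDerivAt (fun t : ℝ => u (x + t • w)) (fderiv ℝ u (x + t • w) w) t := by
    intro t _
    have h1 : HasFDerivAt u (fderiv ℝ u (x + t • w)) (x + t • w) :=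
      (hu.differentiable (by simp)).differentiableAt.hasFDerivAt
    have h2 : HasDerivAt (fun t : ℝ => x + t • w) w t := by
      simpa using ((hasDerivAt_id t).smul_const w).const_add x
    exact h1.comp_hasDerivAt t h2
  have hcont : Continuous (fun t : ℝ => fderiv ℝ u (x + t • w) w) := by fun_prop
  have hftc := intervalIntegral.integral_eq_sub_of_hasDerivAt hder
    (hcont.intervalIntegrable 0 1)
  have h1 : |u x| ≤ ‖w‖ * ∫ t in Icc (0:ℝ) 1, ‖fderiv ℝ u (x + t • w)‖ := by
    have : u x = - ∫ t in (0:ℝ)..1, fderiv ℝ u (x + t • w) w := by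
      rw [hftc]; simp [h0]
    rw [this, abs_neg, integral_Icc_eq_integral_Ioc, ← intervalIntegral.integral_of_le zero_le_one,
      ← intervalIntegral.integral_const_mul]
    refine (intervalIntegral.abs_integral_le_integral_abs zero_le_one).trans ?_
    refine intervalIntegral.integral_mono_on zero_le_one ?_ ?_ ?_
    · exact hcont.abs.intervalIntegrable 0 1
    · exact (hgc.const_mul _).intervalIntegrable 0 1
    · intro t _
      rw [mul_comm, ← Real.norm_eq_abs]
      exact ContinuousLinearMap.le_opNorm _ _
  have hI0 : 0 ≤ ∫ t in Icc (0:ℝ) 1, ‖fderiv ℝ u (x + t • w)‖ :=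
    integral_nonneg fun t => norm_nonneg _
  have : IsProbabilityMeasure (volume.restrict (Icc (0:ℝ) 1)) := ⟨by simp⟩
  have hgp : Continuous (fun t : ℝ => ‖fderiv ℝ u (x + t • w)‖ ^ p) :=
    hgc.rpow_const fun _ => Or.inr hp0.le
  have hJ := (convexOn_rpow hp).map_integral_le (μ := volume.restrict (Icc (0:ℝ) 1))
    (f := fun t : ℝ => ‖fderiv ℝ u (x + t • w)‖)
    ((Real.continuous_rpow_const hp0.le).continuousOn) isClosed_Ici
    (ae_of_all _ fun t => norm_nonneg _)
    (hgc.continuousOn.integrableOn_compact isCompact_Icc)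
    (hgp.continuousOn.integrableOn_compact isCompact_Icc)
  calc |u x| ^ p ≤ (‖w‖ * ∫ t in Icc (0:ℝ) 1, ‖fderiv ℝ u (x + t • w)‖) ^ p :=
        Real.rpow_le_rpow (abs_nonneg _) h1 hp0.le
    _ = ‖w‖ ^ p * (∫ t in Icc (0:ℝ) 1, ‖fderiv ℝ u (x + t • w)‖) ^ p :=
        Real.mul_rpow (norm_nonneg _) hI0
    _ ≤ _ := by gcongr

lemma swap_translate {N : ℕ} (G : EuclideanSpace ℝ (Fin N) → ℝ≥0∞) (hG : Measurable G)
    (w : EuclideanSpace ℝ (Fin N)) :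
    ∫⁻ x, ∫⁻ t in Icc (0:ℝ) 1, G (x + t • w) = ∫⁻ x, G x := by
  have hm : Measurable (fun q : EuclideanSpace ℝ (Fin N) × ℝ => G (q.1 + q.2 • w)) :=
    hG.comp (Continuous.measurable (by fun_prop))
  have hmeas : AEMeasurable (Function.uncurry fun (x : EuclideanSpace ℝ (Fin N)) (t : ℝ) =>
      G (x + t • w)) (volume.prod (volume.restrict (Icc (0:ℝ) 1))) := hm.aemeasurable
  rw [lintegral_lintegral_swap hmeas]
  have : ∀ t : ℝ, ∫⁻ x, G (x + t • w) = ∫⁻ x, G x := fun t =>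
    lintegral_add_right_eq_self G (t • w)
  simp_rw [this]
  rw [lintegral_const]
  simp

lemma piece_bound {N : ℕ} {u : EuclideanSpace ℝ (Fin N) → ℝ}
    (hu : ContDiff ℝ (⊤ : ℕ∞) u) {p : ℝ} (hp : 1 ≤ p) (w : EuclideanSpace ℝ (Fin N))
    {Q : Set (EuclideanSpace ℝ (Fin N))} (hQ : MeasurableSet Q)
    (h0 : ∀ x ∈ Q, u (x + w) = 0) :
    ∫⁻ x in Q, ENNReal.ofReal (|u x| ^ p) ≤
      ENNReal.ofReal (‖w‖ ^ p) * ∫⁻ x, ENNReal.ofReal (‖fderiv ℝ u x‖ ^ p) := by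
  have hp0 : 0 < p := by linarith
  have hfc : Continuous (fderiv ℝ u) := hu.continuous_fderiv (by simp)
  have hgp : Continuous (fun x => ‖fderiv ℝ u x‖ ^ p) :=
    hfc.norm.rpow_const fun _ => Or.inr hp0.le
  have hw : 0 ≤ ‖w‖ ^ p := Real.rpow_nonneg (norm_nonneg _) _
  have hsw := swap_translate (fun x => ENNReal.ofReal (‖fderiv ℝ u x‖ ^ p))
    (ENNReal.measurable_ofReal.comp hgp.measurable) w
  rw [← hsw, ← lintegral_const_mul' _ _ ENNReal.ofReal_ne_top]
  refine le_trans ?_ (setLIntegral_le_lintegral Q _)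
  refine setLIntegral_mono' hQ fun x hx => ?_
  have hc : Continuous (fun t : ℝ => ‖fderiv ℝ u (x + t • w)‖ ^ p) :=
    hgp.comp (by fun_prop : Continuous fun t : ℝ => x + t • w)
  have hi : Integrable (fun t : ℝ => ‖fderiv ℝ u (x + t • w)‖ ^ p)
      (volume.restrict (Icc (0:ℝ) 1)) := hc.continuousOn.integrableOn_compact isCompact_Icc
  rw [← ofReal_integral_eq_lintegral_ofReal hi
    (ae_of_all _ fun t => Real.rpow_nonneg (norm_nonneg _) _), ← ENNReal.ofReal_mul hw]
  exact ENNReal.ofReal_le_ofReal (pointwise_bound hu hp x w (h0 x hx))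

/-- Poincare inequality through a finite cover by translatable pieces. -/
lemma poincare_cover {N : ℕ} {Ω K : Set (EuclideanSpace ℝ (Fin N))} {ρ : ℝ} (hρ : 0 < ρ)
    (hK : IsCompact K) (hΩK : Ω ⊆ K)
    (hw : ∀ x ∈ K, ∃ w : EuclideanSpace ℝ (Fin N), ‖w‖ ≤ ρ ∧ x + w ∈ interior Ωᶜ) :
    ∃ k : ℕ, ∀ p : ℝ, 1 ≤ p → ∀ u : EuclideanSpace ℝ (Fin N) → ℝ,
      ContDiff ℝ (⊤ : ℕ∞) u → HasCompactSupport u → tsupport u ⊆ Ω →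
      ∫ x in Ω, |u x| ^ p ≤ k * ρ ^ p * ∫ x in Ω, ‖gradient u x‖ ^ p := by
  classical
  choose! w hwρ hwi using hw
  obtain ⟨t, htK, ht⟩ := hK.elim_nhds_subcover
    (fun x => (fun y => y + w x) ⁻¹' interior Ωᶜ)
    (fun x hx => (isOpen_interior.preimage (by fun_prop)).mem_nhds (hwi x hx))
  refine ⟨t.card, fun p hp u hu hc hs => ?_⟩
  have hp0 : 0 < p := by linarith
  have hu0 : ∀ x ∉ Ω, u x = 0 := fun x hx => image_eq_zero_of_notMem_tsupport fun h => hx (hs h)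
  have hd0 : ∀ x ∉ Ω, fderiv ℝ u x = 0 := fun x hx =>
    image_eq_zero_of_notMem_tsupport fun h => hx (hs (tsupport_fderiv_subset ℝ h))
  have hfc : Continuous (fderiv ℝ u) := hu.continuous_fderiv (by simp)
  simp only [norm_grad]
  rw [setIntegral_eq_integral_of_forall_compl_eq_zero
      (fun x hx => by simp [hu0 x hx, hp0.ne']),
    setIntegral_eq_integral_of_forall_compl_eq_zero
      (fun x hx => by simp [hd0 x hx, hp0.ne'])]
  have hi1 : Integrable (fun x => |u x| ^ p) := by
    refine Continuous.integrable_of_hasCompactSupport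
      (hu.continuous.abs.rpow_const fun _ => Or.inr hp0.le) ?_
    exact hc.comp_left (g := fun y => |y| ^ p) (by simp [hp0.ne'])
  have hi2 : Integrable (fun x => ‖fderiv ℝ u x‖ ^ p) := by
    refine Continuous.integrable_of_hasCompactSupport
      (hfc.norm.rpow_const fun _ => Or.inr hp0.le) ?_
    exact (hc.fderiv ℝ).comp_left (g := fun y => ‖y‖ ^ p) (by simp [hp0.ne'])
  have hpos2 : 0 ≤ ∫ x, ‖fderiv ℝ u x‖ ^ p := integral_nonneg fun x => by positivity
  rw [← ENNReal.ofReal_le_ofReal_iff (by positivity),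
    ofReal_integral_eq_lintegral_ofReal hi1 (ae_of_all _ fun x => by positivity),
    ENNReal.ofReal_mul (by positivity),
    ofReal_integral_eq_lintegral_ofReal hi2 (ae_of_all _ fun x => by positivity)]
  set I := ∫⁻ x, ENNReal.ofReal (‖fderiv ℝ u x‖ ^ p) with hI
  have hset : ∫⁻ x, ENNReal.ofReal (|u x| ^ p) =
      ∫⁻ x in ⋃ i : t, (fun y => y + w i) ⁻¹' interior Ωᶜ, ENNReal.ofReal (|u x| ^ p) := by
    symm
    apply setLIntegral_eq_of_support_subset
    intro x hx
    have hxΩ : x ∈ Ω := by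
      by_contra h
      exact hx (by simp [hu0 x h, hp0.ne'])
    have := ht (hΩK hxΩ)
    simp only [mem_iUnion] at this ⊢
    obtain ⟨i, hi, hxi⟩ := this
    exact ⟨⟨i, hi⟩, hxi⟩
  rw [hset]
  calc _ ≤ ∑' i : t, ∫⁻ x in (fun y => y + w i) ⁻¹' interior Ωᶜ, ENNReal.ofReal (|u x| ^ p) :=
        lintegral_iUnion_le _ _
    _ = ∑ i : t, ∫⁻ x in (fun y => y + w i) ⁻¹' interior Ωᶜ, ENNReal.ofReal (|u x| ^ p) :=
        tsum_fintype _
    _ ≤ ∑ i : t, ENNReal.ofReal (ρ ^ p) * I := by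
        refine Finset.sum_le_sum fun i _ => ?_
        have hmi : MeasurableSet ((fun y => y + w i) ⁻¹' interior Ωᶜ) :=
          (isOpen_interior.preimage (by fun_prop)).measurableSet
        refine (piece_bound hu hp (w i) hmi
          (fun x hx => hu0 _ (interior_subset hx))).trans ?_
        gcongr
        exact hwρ i (htK i i.2)
    _ = ENNReal.ofReal (t.card * ρ ^ p) * I := by
        rw [Finset.sum_const, nsmul_eq_mul, ENNReal.ofReal_mul (by positivity), mul_assoc]
        simp

lemma denom_pos {N : ℕ} {Ω : Set (EuclideanSpace ℝ (Fin N))}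
    {u : EuclideanSpace ℝ (Fin N) → ℝ} {p : ℝ} (hp : 1 ≤ p)
    (hu : ContDiff ℝ (⊤ : ℕ∞) u) (hne : u ≠ 0) (hc : HasCompactSupport u)
    (hs : tsupport u ⊆ Ω) : 0 < ∫ x in Ω, |u x| ^ p := by
  have hp0 : 0 < p := by linarith
  have hu0 : ∀ x ∉ Ω, u x = 0 := fun x hx => image_eq_zero_of_notMem_tsupport fun h => hx (hs h)
  rw [setIntegral_eq_integral_of_forall_compl_eq_zero
      (fun x hx => by simp [hu0 x hx, hp0.ne'])]
  obtain ⟨x, hx⟩ := Function.ne_iff.1 hne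
  refine Continuous.integral_pos_of_hasCompactSupport_nonneg_nonzero (x := x)
    (hu.continuous.abs.rpow_const fun _ => Or.inr hp0.le)
    (hc.comp_left (g := fun y => |y| ^ p) (by simp [hp0.ne'])) (fun x => by positivity) ?_
  have : 0 < |u x| := abs_pos.2 hx
  positivity

lemma exists_test {N : ℕ} (c : EuclideanSpace ℝ (Fin N)) {r δ : ℝ} (hδ : 0 < δ)
    (hr : 4 * δ < r) :
    ∃ u : EuclideanSpace ℝ (Fin N) → ℝ, ContDiff ℝ (⊤ : ℕ∞) u ∧ HasCompactSupport u ∧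
      tsupport u ⊆ ball c r ∧ (∀ x, ‖gradient u x‖ ≤ 1) ∧ ∀ x ∈ ball c δ, r - 4 * δ ≤ u x := by
  let φ : ContDiffBump (0 : EuclideanSpace ℝ (Fin N)) := ⟨δ / 2, δ, by linarith, by linarith⟩
  let f : EuclideanSpace ℝ (Fin N) → ℝ := fun x => max (r - 2 * δ - dist x c) 0
  have hfL : ∀ x y, |f x - f y| ≤ dist x y := by
    intro x y
    refine (abs_max_sub_max_le_abs _ _ _).trans ?_
    have := abs_dist_sub_le x y c
    rw [abs_sub_comm]
    have h2 : r - 2 * δ - dist y c - (r - 2 * δ - dist x c) = dist x c - dist y c := by ring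
    rw [h2]
    exact this
  have hfc : Continuous f := by fun_prop
  let u := convolution (φ.normed volume) f (ContinuousLinearMap.lsmul ℝ ℝ) volume
  have hud : ∀ x, u x = ∫ t, φ.normed volume t * f (x - t) := fun x => by
    simp [u, convolution_def]
  have hφc : Continuous (φ.normed volume) := φ.continuous_normed
  have hint : ∀ x, Integrable (fun t => φ.normed volume t * f (x - t)) := fun x =>
    Continuous.integrable_of_hasCompactSupport (by fun_prop)
      (φ.hasCompactSupport_normed.mul_right)
  have huL : LipschitzWith 1 u := by
    refine LipschitzWith.of_dist_le_mul fun x y => ?_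
    rw [Real.dist_eq, hud, hud, ← integral_sub (hint x) (hint y), NNReal.coe_one, one_mul]
    calc _ ≤ ∫ t, |φ.normed volume t * f (x - t) - φ.normed volume t * f (y - t)| :=
          abs_integral_le_integral_abs
      _ ≤ ∫ t, φ.normed volume t * dist x y := by
          refine integral_mono ((hint x).sub (hint y)).abs (φ.integrable_normed.mul_const _) ?_
          intro t
          have h := hfL (x - t) (y - t)
          rw [dist_sub_right] at h
          simp only
          rw [← mul_sub, abs_mul, abs_of_nonneg (φ.nonneg_normed t)]
          exact mul_le_mul_of_nonneg_left h (φ.nonneg_normed t)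
      _ = dist x y := by rw [integral_mul_const, φ.integral_normed, one_mul]
  have hsupp : Function.support u ⊆ closedBall c (r - δ) := by
    refine (support_convolution_subset _).trans ?_
    rintro _ ⟨a, ha, b, hb, rfl⟩
    rw [φ.support_normed_eq, mem_ball_zero_iff] at ha
    have hb' : dist b c < r - 2 * δ := by
      by_contra h
      exact hb (max_eq_right (by linarith))
    have ha' : ‖a‖ < δ := ha
    rw [mem_closedBall]
    rw [dist_eq_norm] at hb' ⊢
    have : a + b - c = a + (b - c) := by abel
    simp only [this]
    linarith [norm_add_le a (b - c)]
  have hts : tsupport u ⊆ closedBall c (r - δ) := closure_minimal hsupp isClosed_closedBall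
  refine ⟨u, ?_, ?_, ?_, ?_, ?_⟩
  · exact φ.hasCompactSupport_normed.contDiff_convolution_left _ φ.contDiff_normed
      hfc.locallyIntegrable
  · exact HasCompactSupport.of_support_subset_isCompact (isCompact_closedBall _ _) hsupp
  · exact hts.trans (closedBall_subset_ball (by linarith))
  · intro x
    rw [norm_grad]
    simpa using norm_fderiv_le_of_lipschitz ℝ huL (x₀ := x)
  · intro x hx
    have h := ContDiffBump.dist_normed_convolution_le (φ := φ) (μ := volume) (g := f) (x₀ := x)
      (ε := δ) hfc.aestronglyMeasurable (fun y hy => by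
        rw [Real.dist_eq]
        exact (hfL y x).trans (mem_ball.1 hy).le)
    have h2 : r - 2 * δ - dist x c ≤ f x := le_max_left _ _
    rw [mem_ball] at hx
    rw [Real.dist_eq] at h
    have h3 := (abs_le.1 h).1
    change -δ ≤ u x - f x at h3
    linarith

lemma tendsto_const_rpow_inv {C a : ℝ} (hC : 0 < C) (ha : 0 < a) :
    Tendsto (fun p : ℝ => (C * a ^ p) ^ (1 / p)) atTop (𝓝 a) := by
  have h1 : Tendsto (fun p : ℝ => C ^ (1 / p) * a) atTop (𝓝 a) := by
    have h0 : Tendsto (fun p : ℝ => 1 / p) atTop (𝓝 0) := by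
      simp only [one_div]
      exact tendsto_inv_atTop_zero
    have : Tendsto (fun p : ℝ => C ^ (1 / p)) atTop (𝓝 (C ^ (0:ℝ))) :=
      ((Real.continuous_const_rpow hC.ne').tendsto 0).comp
        h0
    simpa using this.mul_const a
  refine h1.congr' ?_
  filter_upwards [eventually_gt_atTop 0] with p hp
  rw [Real.mul_rpow hC.le (by positivity), ← Real.rpow_mul ha.le, mul_one_div_cancel hp.ne',
    Real.rpow_one]

lemma lam1_nonneg {N : ℕ} (p : ℝ) (Ω : Set (EuclideanSpace ℝ (Fin N))) : 0 ≤ lam1 p Ω := by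
  refine Real.sInf_nonneg ?_
  rintro _ ⟨u, -, -, -, -, rfl⟩
  exact div_nonneg (integral_nonneg fun x => by positivity) (integral_nonneg fun x => by positivity)

lemma lam1_upper {N : ℕ} {Ω : Set (EuclideanSpace ℝ (Fin N))} (hb : Bornology.IsBounded Ω)
    (hΩ : MeasurableSet Ω)
    {c : EuclideanSpace ℝ (Fin N)} {r : ℝ} (hr : 0 < r) (hc : ball c r ⊆ Ω) {L : ℝ}
    (hL : Tendsto (fun p : ℝ => (lam1 p Ω) ^ (1 / p)) atTop (𝓝 L)) : L ≤ 1 / r := by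
  have key : ∀ δ : ℝ, 0 < δ → 4 * δ < r → L ≤ 1 / (r - 4 * δ) := by
    intro δ hδ hδr
    obtain ⟨u, hu, hcs, hts, hg, hlow⟩ := exists_test c hδ hδr
    have ha : 0 < r - 4 * δ := by linarith
    have hfin : volume Ω ≠ ∞ := hb.measure_lt_top.ne
    have hball : ball c δ ⊆ Ω := (ball_subset_ball (by linarith)).trans hc
    have hv : 0 < volume.real (ball c δ) :=
      ENNReal.toReal_pos (measure_ball_pos _ _ hδ).ne' measure_ball_lt_top.ne
    have hV : 0 < volume.real Ω :=
      ENNReal.toReal_pos ((measure_ball_pos volume c hδ).trans_le (measure_mono hball)).ne' hfin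
    have hne : u ≠ 0 := by
      intro h
      have := hlow c (mem_ball_self hδ)
      simp [h] at this
      linarith
    refine le_of_tendsto_of_tendsto hL (tendsto_const_rpow_inv
      (C := volume.real Ω / volume.real (ball c δ)) (by positivity)
      (a := 1 / (r - 4 * δ)) (by positivity)) ?_
    filter_upwards [eventually_ge_atTop 1] with p hp
    have hp0 : 0 < p := by linarith
    refine Real.rpow_le_rpow (lam1_nonneg _ _) ?_ (by positivity)
    have hle : lam1 p Ω ≤ (∫ x in Ω, ‖gradient u x‖ ^ p) / (∫ x in Ω, |u x| ^ p) := by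
      refine csInf_le ⟨0, ?_⟩ ⟨u, hu, hne, hcs, hts.trans hc, rfl⟩
      rintro _ ⟨v, -, -, -, -, rfl⟩
      exact div_nonneg (integral_nonneg fun x => by positivity)
        (integral_nonneg fun x => by positivity)
    refine hle.trans ?_
    have hgc : Continuous (fun x => ‖gradient u x‖ ^ p) := by
      simp only [norm_grad]
      exact (hu.continuous_fderiv (by simp)).norm.rpow_const fun _ => Or.inr hp0.le
    have huc : Continuous (fun x => |u x| ^ p) := hu.continuous.abs.rpow_const fun _ => Or.inr hp0.le
    have hgi : IntegrableOn (fun x => ‖gradient u x‖ ^ p) Ω :=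
      (hgc.continuousOn.integrableOn_compact hb.isCompact_closure).mono_set subset_closure
    have hui : IntegrableOn (fun x => |u x| ^ p) Ω :=
      (huc.continuousOn.integrableOn_compact hb.isCompact_closure).mono_set subset_closure
    have hnum : ∫ x in Ω, ‖gradient u x‖ ^ p ≤ volume.real Ω := by
      have := setIntegral_mono_on hgi (integrableOn_const (C := (1:ℝ)) hfin) hΩ
        (fun x _ => Real.rpow_le_one (norm_nonneg _) (hg x) hp0.le)
      simpa using this
    have hden : volume.real (ball c δ) * (r - 4 * δ) ^ p ≤ ∫ x in Ω, |u x| ^ p := by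
      calc _ = ∫ x in ball c δ, (r - 4 * δ) ^ p := by simp
        _ ≤ ∫ x in ball c δ, |u x| ^ p := by
          refine setIntegral_mono_on (integrableOn_const measure_ball_lt_top.ne)
            (hui.mono_set hball) measurableSet_ball fun x hx => ?_
          exact Real.rpow_le_rpow ha.le ((hlow x hx).trans (le_abs_self _)) hp0.le
        _ ≤ _ := setIntegral_mono_set hui (ae_of_all _ fun x => by positivity)
              (LE.le.eventuallyLE hball)
    calc _ ≤ volume.real Ω / (volume.real (ball c δ) * (r - 4 * δ) ^ p) :=
          div_le_div₀ hV.le hnum (by positivity) hden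
      _ = _ := by rw [Real.div_rpow zero_le_one ha.le, Real.one_rpow]; field_simp
  have hlim : Tendsto (fun δ : ℝ => 1 / (r - 4 * δ)) (𝓝[>] 0) (𝓝 (1 / r)) := by
    have : ContinuousAt (fun δ : ℝ => 1 / (r - 4 * δ)) 0 := by
      refine ContinuousAt.div (by fun_prop) (by fun_prop) (by simpa using hr.ne')
    have h := this.tendsto
    simp only [mul_zero, sub_zero] at h
    exact h.mono_left nhdsWithin_le_nhds
  refine ge_of_tendsto hlim ?_
  filter_upwards [Ioo_mem_nhdsGT (show (0:ℝ) < r / 4 by positivity)] with δ hδ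
  exact key δ hδ.1 (by linarith [hδ.2])

lemma lam1_lower {N : ℕ} {Ω K : Set (EuclideanSpace ℝ (Fin N))} {ρ : ℝ} (hρ : 0 < ρ)
    (hK : IsCompact K) (hΩK : Ω ⊆ K)
    (hw : ∀ x ∈ K, ∃ w : EuclideanSpace ℝ (Fin N), ‖w‖ ≤ ρ ∧ x + w ∈ interior Ωᶜ)
    {c : EuclideanSpace ℝ (Fin N)} {r : ℝ} (hr : 0 < r) (hc : ball c r ⊆ Ω) {L : ℝ}
    (hL : Tendsto (fun p : ℝ => (lam1 p Ω) ^ (1 / p)) atTop (𝓝 L)) : 1 / ρ ≤ L := by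
  obtain ⟨k, hk⟩ := poincare_cover hρ hK hΩK hw
  refine le_of_tendsto_of_tendsto (tendsto_const_rpow_inv
      (C := 1 / (k + 1 : ℝ)) (by positivity) (a := 1 / ρ) (by positivity)) hL ?_
  filter_upwards [eventually_ge_atTop 1] with p hp
  have hp0 : 0 < p := by linarith
  refine Real.rpow_le_rpow (by positivity) ?_ (by positivity)
  refine le_csInf ?_ ?_
  · obtain ⟨u, hu, hcs, hts, -, hlow⟩ := exists_test c (δ := r / 8) (r := r) (by linarith) (by linarith)
    refine ⟨_, u, hu, ?_, hcs, hts.trans hc, rfl⟩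
    intro h
    have := hlow c (mem_ball_self (by linarith))
    simp [h] at this
    linarith
  · rintro _ ⟨u, hu, hne, hcs, hts, rfl⟩
    have hpos := denom_pos hp hu hne hcs hts
    have h := hk p hp u hu hcs hts
    have hg : 0 ≤ ∫ x in Ω, ‖gradient u x‖ ^ p := integral_nonneg fun x => by positivity
    have hρp : 0 < ρ ^ p := by positivity
    rw [le_div_iff₀ hpos, Real.div_rpow zero_le_one hρ.le, Real.one_rpow, div_mul_div_comm, one_mul, div_mul_eq_mul_div, one_mul, div_le_iff₀ (by positivity)]
    nlinarith [mul_nonneg hg hρp.le]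


lemma norm_e1 (N : ℕ) (hN : 2 ≤ N) : ‖e1 N‖ = 1 := by
  have : e1 N = EuclideanSpace.single (⟨0, by omega⟩ : Fin N) (1:ℝ) := by
    ext i
    simp [e1, Fin.ext_iff, Pi.single_apply]
  rw [this]; simp

lemma limit_value (N : ℕ) (hN : 2 ≤ N) (R₀ R₁ s L : ℝ) (hR₀ : 0 < R₀)
    (hs0 : 0 ≤ s) (hs1 : s < R₁ - R₀)
    (hL : Tendsto (fun p : ℝ => (lam1 p (Om N R₀ R₁ s)) ^ (1 / p)) atTop (𝓝 L)) :
    L = 1 / ((R₁ - R₀ + s) / 2) := by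
  have he := norm_e1 N hN
  have hr : 0 < (R₁ - R₀ + s) / 2 := by linarith
  have hcl : closure (ball (s • e1 N) R₀) = closedBall (s • e1 N) R₀ :=
    closure_ball _ hR₀.ne'
  have hsub : Om N R₀ R₁ s ⊆ closedBall 0 R₁ := sdiff_subset.trans ball_subset_closedBall
  have hbd : Bornology.IsBounded (Om N R₀ R₁ s) := isBounded_closedBall.subset hsub
  have hms : MeasurableSet (Om N R₀ R₁ s) := measurableSet_ball.diff isClosed_closure.measurableSet
  have hball : ball (((s - R₀ - R₁) / 2) • e1 N) ((R₁ - R₀ + s) / 2) ⊆ Om N R₀ R₁ s := by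
    intro x hx
    rw [mem_ball, dist_eq_norm] at hx
    refine ⟨?_, ?_⟩
    · rw [mem_ball_zero_iff]
      have h1 := norm_sub_norm_le x (((s - R₀ - R₁) / 2) • e1 N)
      rw [norm_smul, he, mul_one, Real.norm_eq_abs, abs_of_neg (by linarith)] at h1
      linarith
    · rw [hcl, mem_closedBall, not_le, dist_eq_norm]
      have h1 := norm_sub_le_norm_sub_add_norm_sub (s • e1 N) x (((s - R₀ - R₁) / 2) • e1 N)
      rw [← sub_smul, norm_smul, he, mul_one, Real.norm_eq_abs, abs_of_pos (by linarith),
        norm_sub_rev _ x] at h1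
      linarith
  apply le_antisymm
  · exact lam1_upper hbd hms hr hball hL
  · have hlim : Tendsto (fun η : ℝ => 1 / ((R₁ - R₀ + s) / 2 + η)) (𝓝[>] 0)
        (𝓝 (1 / ((R₁ - R₀ + s) / 2))) := by
      have : ContinuousAt (fun η : ℝ => 1 / ((R₁ - R₀ + s) / 2 + η)) 0 := by
        refine ContinuousAt.div (by fun_prop) (by fun_prop) (by simpa using hr.ne')
      have h := this.tendsto
      simp only [add_zero] at h
      exact h.mono_left nhdsWithin_le_nhds
    refine le_of_tendsto hlim ?_
    filter_upwards [self_mem_nhdsWithin] with η hη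
    have hη : 0 < η := hη
    refine lam1_lower (by linarith) (isCompact_closedBall 0 R₁) hsub ?_ hr hball hL
    intro x hx
    rw [mem_closedBall_zero_iff] at hx
    -- a unit vector along which `x` points
    have hunit : ∀ y : EuclideanSpace ℝ (Fin N), ∃ v : EuclideanSpace ℝ (Fin N),
        ‖v‖ = 1 ∧ y = ‖y‖ • v := by
      intro y
      by_cases hy : y = 0
      · exact ⟨e1 N, he, by simp [hy]⟩
      · have : ‖y‖ ≠ 0 := norm_ne_zero_iff.2 hy
        exact ⟨‖y‖⁻¹ • y, by rw [norm_smul, norm_inv, norm_norm, inv_mul_cancel₀ this],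
          by rw [smul_smul, mul_inv_cancel₀ this, one_smul]⟩
    by_cases hcase : R₁ - ‖x‖ ≤ (R₁ - R₀ + s) / 2
    · obtain ⟨v, hv, hxv⟩ := hunit x
      refine ⟨((R₁ - R₀ + s) / 2 + η) • v, ?_, ?_⟩
      · rw [norm_smul, hv, mul_one, Real.norm_eq_abs, abs_of_pos (by linarith)]
      · rw [mem_interior]
        refine ⟨(closedBall 0 R₁)ᶜ, compl_subset_compl.2 hsub, isClosed_closedBall.isOpen_compl, ?_⟩
        rw [mem_compl_iff, mem_closedBall_zero_iff, not_le]
        have : x + ((R₁ - R₀ + s) / 2 + η) • v = (‖x‖ + ((R₁ - R₀ + s) / 2 + η)) • v := by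
          rw [add_smul ‖x‖ _ v, ← hxv]
        rw [this, norm_smul, hv, mul_one, Real.norm_eq_abs,
          abs_of_pos (by have := norm_nonneg x; linarith)]
        linarith
    · push Not at hcase
      have hxs : ‖x - s • e1 N‖ < (R₁ - R₀ + s) / 2 + R₀ := by
        have h1 := norm_sub_le x (s • e1 N)
        rw [norm_smul, he, mul_one, Real.norm_eq_abs, abs_of_nonneg hs0] at h1
        linarith
      obtain ⟨v, hv, hxv⟩ := hunit (x - s • e1 N)
      have hint : ball (s • e1 N) R₀ ⊆ interior (Om N R₀ R₁ s)ᶜ :=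
        interior_maximal (fun z hz hz' => hz'.2 (subset_closure hz)) isOpen_ball
      set m := min ‖x - s • e1 N‖ ((R₁ - R₀ + s) / 2) with hm
      have hm0 : 0 ≤ m := le_min (norm_nonneg _) hr.le
      refine ⟨-(m • v), ?_, hint ?_⟩
      · rw [norm_neg, norm_smul, hv, mul_one, Real.norm_eq_abs, abs_of_nonneg hm0]
        linarith [min_le_right ‖x - s • e1 N‖ ((R₁ - R₀ + s) / 2)]
      · rw [mem_ball, dist_eq_norm]
        have : x + -(m • v) - s • e1 N = (‖x - s • e1 N‖ - m) • v := by
          rw [sub_smul, ← hxv]; abel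
        rw [this, norm_smul, hv, mul_one, Real.norm_eq_abs,
          abs_of_nonneg (by linarith [min_le_left ‖x - s • e1 N‖ ((R₁ - R₀ + s) / 2)])]
        rcases min_choice ‖x - s • e1 N‖ ((R₁ - R₀ + s) / 2) with h | h
        · rw [hm, h]; linarith
        · rw [hm, h]; linarith

theorem stmt4 (N : ℕ) (hN : 2 ≤ N) (R₀ R₁ : ℝ) (hR₀ : 0 < R₀) (hR : R₀ < R₁)
    (Λ : ℝ → ℝ)
    (hΛ : ∀ s ∈ Set.Ico 0 (R₁ - R₀),
      Tendsto (fun p : ℝ => (lam1 p (Om N R₀ R₁ s)) ^ (1 / p)) atTop (nhds (Λ s))) :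
    ContinuousOn Λ (Set.Ico 0 (R₁ - R₀)) ∧ StrictAntiOn Λ (Set.Ico 0 (R₁ - R₀)) := by
  have key : ∀ s ∈ Set.Ico 0 (R₁ - R₀), Λ s = 1 / ((R₁ - R₀ + s) / 2) := fun s hs =>
    limit_value N hN R₀ R₁ s (Λ s) hR₀ hs.1 hs.2 (hΛ s hs)
  constructor
  · refine ContinuousOn.congr ?_ key
    refine ContinuousOn.div (by fun_prop) (by fun_prop) fun s hs => ?_
    have := hs.1
    exact (by linarith : 0 < (R₁ - R₀ + s) / 2).ne'
  · intro a ha b hb hab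
    rw [key a ha, key b hb]
    have := ha.1
    exact one_div_lt_one_div_of_lt (by linarith) (by linarith)
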